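/- Let V = V₁ ⊕ V₂ be a unitary representation of G on H = H₁ ⊕ H₂ where V₁ and V₂ are irreducible and unitarily equivalent (V₂ = U V₁ U* for a unitary U : H₁ → H₂). If T is a G-invariant self-adjoint operator with respect to V, then T is bounded. -/

import Mathlib

open scoped InnerProductSpace
open LinearPMap

/-- `G`-invariance of a (possibly unbounded) operator `T` with respect to a unitary
representation `V`. -/
def GInvariant {H : Type*} [NormedAddCommGroup H] [InnerProductSpace ℂ H]
    {G : Type*} [Group G] (V : G →* (H ≃ₗᵢ[ℂ] H)) (T : H →ₗ.[ℂ] H) : Prop :=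
  ∀ g : G, ∀ x : T.domain, ∃ hx : V g (x : H) ∈ T.domain,
    T ⟨V g (x : H), hx⟩ = V g (T x)

/-!
Schur's lemma makes the space of bounded intertwiners between two irreducible unitary
representations finite-dimensional, so the commutant of a representation `V` spanned by finitely
many irreducible subspaces is finite-dimensional; in particular an injective element of the
commutant has a right inverse there.

The graph of a closed invariant operator `T` is a closed invariant subspace of `V ⊕ V`, and its
projection `p` to the first coordinate intertwines. If `T` is densely defined, then `p` has dense
range, so `p p*` is an injective element of the commutant. Hence `p p*` is onto, and therefore so
is `p`: `T` is everywhere defined, and the closed graph theorem applies.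
-/

section Intertwiners

variable {𝕜 G K L M : Type*} [RCLike 𝕜] [Group G]
  [NormedAddCommGroup K] [InnerProductSpace 𝕜 K]
  [NormedAddCommGroup L] [InnerProductSpace 𝕜 L]
  [NormedAddCommGroup M] [InnerProductSpace 𝕜 M]
  {ρ : G →* (K ≃ₗᵢ[𝕜] K)} {σ : G →* (L ≃ₗᵢ[𝕜] L)} {τ : G →* (M ≃ₗᵢ[𝕜] M)}

/-- The space of bounded operators intertwining two unitary representations; `intertwiners ρ ρ` is
the commutant of `ρ`. -/
def intertwiners (ρ : G →* (K ≃ₗᵢ[𝕜] K)) (σ : G →* (L ≃ₗᵢ[𝕜] L)) : Submodule 𝕜 (K →L[𝕜] L) where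
  carrier := {A | ∀ g x, A (ρ g x) = σ g (A x)}
  add_mem' hA hB g x := by simp [hA g x, hB g x]
  zero_mem' g x := by simp
  smul_mem' c A hA g x := by simp [hA g x]

lemma one_mem_intertwiners : (1 : K →L[𝕜] K) ∈ intertwiners ρ ρ := fun _ _ => rfl

lemma comp_mem_intertwiners {B : L →L[𝕜] M} {A : K →L[𝕜] L} (hB : B ∈ intertwiners σ τ)
    (hA : A ∈ intertwiners ρ σ) : B ∘L A ∈ intertwiners ρ τ := fun g x => by
  rw [ContinuousLinearMap.comp_apply, hA, hB, ContinuousLinearMap.comp_apply]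

lemma adjoint_mem_intertwiners [CompleteSpace K] [CompleteSpace L] {A : K →L[𝕜] L}
    (hA : A ∈ intertwiners ρ σ) : ContinuousLinearMap.adjoint A ∈ intertwiners σ ρ := fun g y =>
  ext_inner_right 𝕜 fun x => by
    have hAinv : A ((ρ g).symm x) = (σ g).symm (A x) := by
      have h := hA g⁻¹ x
      rwa [_root_.map_inv, _root_.map_inv] at h
    rw [ContinuousLinearMap.adjoint_inner_left, LinearIsometryEquiv.inner_map_eq_flip,
      LinearIsometryEquiv.inner_map_eq_flip, ContinuousLinearMap.adjoint_inner_left, hAinv]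

/-- Composition on the left with a fixed intertwiner. -/
def intertwinersPostcomp (ρ : G →* (K ≃ₗᵢ[𝕜] K)) (B : intertwiners σ τ) :
    intertwiners ρ σ →ₗ[𝕜] intertwiners ρ τ :=
  (ContinuousLinearMap.postcomp K (B : L →L[𝕜] M)).toLinearMap.restrict
    fun _ hA => comp_mem_intertwiners B.2 hA

lemma intertwinersPostcomp_injective {B : intertwiners σ τ}
    (hB : Function.Injective (B : L →L[𝕜] M)) :
    Function.Injective (intertwinersPostcomp ρ B) := fun _ _ h =>
  Subtype.ext <| ContinuousLinearMap.ext fun x =>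
    hB (DFunLike.congr_fun (congrArg Subtype.val h) x)

/-- Composition on the right with a fixed intertwiner. -/
def intertwinersPrecomp (τ : G →* (M ≃ₗᵢ[𝕜] M)) (A : intertwiners ρ σ) :
    intertwiners σ τ →ₗ[𝕜] intertwiners ρ τ :=
  (ContinuousLinearMap.precomp M (A : K →L[𝕜] L)).toLinearMap.restrict
    fun _ hB => comp_mem_intertwiners hB A.2

lemma surjective_of_injective_of_mem_intertwiners [FiniteDimensional 𝕜 (intertwiners ρ ρ)]
    {R : K →L[𝕜] K} (hR : R ∈ intertwiners ρ ρ) (hinj : Function.Injective R) :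
    Function.Surjective R := by
  -- Left multiplication by `R` on the commutant is injective, hence onto: `1 = R S` for some `S`.
  have hsurj : Function.Surjective (intertwinersPostcomp ρ ⟨R, hR⟩) :=
    LinearMap.injective_iff_surjective.1 (intertwinersPostcomp_injective hinj)
  obtain ⟨S, hS⟩ := hsurj ⟨1, one_mem_intertwiners⟩
  exact fun y => ⟨S.1 y, DFunLike.congr_fun (congrArg Subtype.val hS) y⟩

lemma surjective_of_denseRange_of_mem_intertwiners [CompleteSpace K] [CompleteSpace L]
    [FiniteDimensional 𝕜 (intertwiners σ σ)] {A : K →L[𝕜] L} (hA : A ∈ intertwiners ρ σ)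
    (hdense : DenseRange A) : Function.Surjective A := by
  have hker : (A ∘L ContinuousLinearMap.adjoint A).ker = ⊥ := by
    rwa [ContinuousLinearMap.ker_self_comp_adjoint, ← ContinuousLinearMap.orthogonal_range,
      ← Submodule.topologicalClosure_eq_top_iff, ← Submodule.dense_iff_topologicalClosure_eq_top]
  have hsurj := surjective_of_injective_of_mem_intertwiners
    (comp_mem_intertwiners hA (adjoint_mem_intertwiners hA))
    (LinearMap.ker_eq_bot.1 hker)
  exact Function.Surjective.of_comp hsurj

/-- Topological irreducibility of a unitary representation: there is no proper nonzero closed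
invariant subspace. The zero representation is not excluded. -/
def IsTopologicallyIrreducible (ρ : G →* (K ≃ₗᵢ[𝕜] K)) : Prop :=
  ∀ N : Submodule 𝕜 K, _root_.IsClosed (N : Set K) → (∀ g, ∀ x ∈ N, ρ g x ∈ N) → N = ⊥ ∨ N = ⊤

lemma IsTopologicallyIrreducible.eq_zero_or_injective (hρ : IsTopologicallyIrreducible ρ)
    {A : K →L[𝕜] L} (hA : A ∈ intertwiners ρ σ) : A = 0 ∨ Function.Injective A := by
  have hinv : ∀ g, ∀ x ∈ A.ker, ρ g x ∈ A.ker := fun g x (hx : A x = 0) =>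
    show A (ρ g x) = 0 by rw [hA, hx, _root_.map_zero]
  rcases hρ A.ker A.isClosed_ker hinv with hbot | htop
  · exact Or.inr (LinearMap.ker_eq_bot.1 hbot)
  · exact Or.inl (ContinuousLinearMap.coe_injective (LinearMap.ker_eq_top.1 htop))

end Intertwiners

section TotalFamily

variable {𝕜 G ι H L : Type*} {K : ι → Type*} [RCLike 𝕜] [Group G]
  [NormedAddCommGroup H] [InnerProductSpace 𝕜 H] [NormedAddCommGroup L] [InnerProductSpace 𝕜 L]
  [∀ i, NormedAddCommGroup (K i)] [∀ i, InnerProductSpace 𝕜 (K i)]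
  {V : G →* (H ≃ₗᵢ[𝕜] H)} {σ : G →* (L ≃ₗᵢ[𝕜] L)} {ρ : ∀ i, G →* (K i ≃ₗᵢ[𝕜] K i)}

lemma eq_zero_of_comp_eq_zero_of_total {j : ∀ i, K i →L[𝕜] H}
    (hj : (⨆ i, (j i).range).topologicalClosure = ⊤) {A : H →L[𝕜] L}
    (hA : ∀ i, A ∘L j i = 0) : A = 0 := by
  have hle : ⨆ i, (j i).range ≤ A.ker := iSup_le fun i => by
    rintro _ ⟨x, rfl⟩
    exact DFunLike.congr_fun (hA i) x
  have htop := Submodule.topologicalClosure_minimal _ hle A.isClosed_ker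
  rw [hj, top_le_iff] at htop
  exact ContinuousLinearMap.coe_injective (LinearMap.ker_eq_top.1 htop)

lemma finiteDimensional_intertwiners_of_total_left [Finite ι] (j : ∀ i, intertwiners (ρ i) V)
    (hj : (⨆ i, (j i : K i →L[𝕜] H).range).topologicalClosure = ⊤)
    [∀ i, FiniteDimensional 𝕜 (intertwiners (ρ i) σ)] :
    FiniteDimensional 𝕜 (intertwiners V σ) := by
  let restrictions : intertwiners V σ →ₗ[𝕜] ∀ i, intertwiners (ρ i) σ :=
    LinearMap.pi fun i => intertwinersPrecomp σ (j i)
  refine FiniteDimensional.of_injective restrictions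
    ((injective_iff_map_eq_zero _).2 fun A hA => ?_)
  exact Subtype.ext <| eq_zero_of_comp_eq_zero_of_total hj fun i =>
    congrArg Subtype.val (congrFun hA i)

lemma finiteDimensional_intertwiners_of_total_right [Finite ι] [CompleteSpace H] [CompleteSpace L]
    [∀ i, CompleteSpace (K i)] (j : ∀ i, intertwiners (ρ i) V)
    (hj : (⨆ i, (j i : K i →L[𝕜] H).range).topologicalClosure = ⊤)
    [∀ i, FiniteDimensional 𝕜 (intertwiners σ (ρ i))] :
    FiniteDimensional 𝕜 (intertwiners σ V) := by
  let components : intertwiners σ V →ₗ[𝕜] ∀ i, intertwiners σ (ρ i) :=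
    LinearMap.pi fun i => intertwinersPostcomp σ ⟨_, adjoint_mem_intertwiners (j i).2⟩
  refine FiniteDimensional.of_injective components
    ((injective_iff_map_eq_zero _).2 fun A hA => ?_)
  have hadj : ContinuousLinearMap.adjoint (A : L →L[𝕜] H) = 0 :=
    eq_zero_of_comp_eq_zero_of_total hj fun i => by
      have hi : ContinuousLinearMap.adjoint (j i : K i →L[𝕜] H) ∘L (A : L →L[𝕜] H) = 0 :=
        congrArg Subtype.val (congrFun hA i)
      simpa using congrArg ContinuousLinearMap.adjoint hi
  exact Subtype.ext ((_root_.map_eq_zero_iff _ ContinuousLinearMap.adjoint.injective).1 hadj)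

end TotalFamily

section Schur

variable {G K L : Type*} [Group G]
  [NormedAddCommGroup K] [InnerProductSpace ℂ K] [CompleteSpace K]
  [NormedAddCommGroup L] [InnerProductSpace ℂ L] [CompleteSpace L]
  {ρ : G →* (K ≃ₗᵢ[ℂ] K)} {σ : G →* (L ≃ₗᵢ[ℂ] L)}

lemma cfc_mem_intertwiners {A : K →L[ℂ] K} (hA : A ∈ intertwiners ρ ρ) (f : ℝ → ℝ) :
    cfc f A ∈ intertwiners ρ ρ := fun g => by
  have hcomm : Commute A (ρ g : K →L[ℂ] K) := ContinuousLinearMap.ext (hA g)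
  exact DFunLike.congr_fun (hcomm.cfc_real f).eq

lemma subsingleton_spectrum_of_mem_intertwiners (hρ : IsTopologicallyIrreducible ρ)
    {A : K →L[ℂ] K} (hA : A ∈ intertwiners ρ ρ) (hsa : IsSelfAdjoint A) :
    (spectrum ℝ A).Subsingleton := by
  have eq_zero_on_spectrum (f : ℝ → ℝ) (hf : Continuous f) (h : cfc f A = 0) :
      ∀ t ∈ spectrum ℝ A, f t = 0 := by
    rw [← cfc_const_zero ℝ A] at h
    exact (cfc_eq_cfc_iff_eqOn hsa hf.continuousOn continuousOn_const).1 h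
  by_contra hne
  obtain ⟨a, ha, b, hb, hab⟩ := (Set.not_subsingleton_iff.1 hne).exists_lt
  obtain ⟨m, ham, hmb⟩ := exists_between hab
  -- `f g = 0`, so `cfc f A` or `cfc g A` is not injective and hence vanishes, although `f a` and
  -- `g b` are positive.
  let f : ℝ → ℝ := fun t => max (m - t) 0
  let g : ℝ → ℝ := fun t => max (t - m) 0
  have hfg : cfc f A ∘L cfc g A = 0 := by
    have hfg0 : ∀ t, f t * g t = 0 := fun t => by
      rcases le_total t m with h | h <;> simp [f, g, h]
    change cfc f A * cfc g A = 0
    rw [← cfc_mul f g A, funext hfg0, cfc_const_zero]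
  rcases hρ.eq_zero_or_injective (cfc_mem_intertwiners hA f) with hf | hf
  · exact (lt_max_of_lt_left (sub_pos.2 ham)).ne' (eq_zero_on_spectrum f (by fun_prop) hf a ha)
  · have hg : cfc g A = 0 := ContinuousLinearMap.ext fun x =>
      hf ((DFunLike.congr_fun hfg x).trans (_root_.map_zero _).symm)
    exact (lt_max_of_lt_left (sub_pos.2 hmb)).ne' (eq_zero_on_spectrum g (by fun_prop) hg b hb)

lemma mem_span_one_of_mem_intertwiners_of_isSelfAdjoint (hρ : IsTopologicallyIrreducible ρ)
    {A : K →L[ℂ] K} (hA : A ∈ intertwiners ρ ρ) (hsa : IsSelfAdjoint A) :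
    A ∈ Submodule.span ℂ {(1 : K →L[ℂ] K)} := by
  obtain ⟨c, hc⟩ : ∃ c : ℝ, spectrum ℝ A ⊆ {c} := by
    rcases (subsingleton_spectrum_of_mem_intertwiners hρ hA hsa).eq_empty_or_singleton with h | h
    · exact ⟨0, h ▸ Set.empty_subset _⟩
    · exact h.imp fun _ => Eq.subset
  rw [CFC.eq_algebraMap_of_spectrum_subset_singleton A c hc, Algebra.algebraMap_eq_smul_one]
  exact Submodule.smul_of_tower_mem _ c (Submodule.mem_span_singleton_self _)

lemma intertwiners_le_span_one (hρ : IsTopologicallyIrreducible ρ) :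
    intertwiners ρ ρ ≤ Submodule.span ℂ {1} := fun A hA => by
  have hre : (realPart A : K →L[ℂ] K) ∈ intertwiners ρ ρ := by
    rw [realPart_apply_coe]
    exact Submodule.smul_of_tower_mem _ _ (add_mem hA (adjoint_mem_intertwiners hA))
  have him : (imaginaryPart A : K →L[ℂ] K) ∈ intertwiners ρ ρ := by
    rw [imaginaryPart_apply_coe]
    exact Submodule.smul_mem _ _
      (Submodule.smul_of_tower_mem _ _ (sub_mem hA (adjoint_mem_intertwiners hA)))
  rw [← realPart_add_I_smul_imaginaryPart A]
  exact add_mem (mem_span_one_of_mem_intertwiners_of_isSelfAdjoint hρ hre (realPart A).2)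
    (Submodule.smul_mem _ _
      (mem_span_one_of_mem_intertwiners_of_isSelfAdjoint hρ him (imaginaryPart A).2))

lemma finiteDimensional_intertwiners_of_irreducible (hρ : IsTopologicallyIrreducible ρ)
    (hσ : IsTopologicallyIrreducible σ) : FiniteDimensional ℂ (intertwiners ρ σ) := by
  by_cases hzero : intertwiners ρ σ = ⊥
  · rw [hzero]
    infer_instance
  obtain ⟨A, hA, hA0⟩ := Submodule.exists_mem_ne_zero_of_ne_bot hzero
  have hinj : Function.Injective (ContinuousLinearMap.adjoint A) :=
    (hσ.eq_zero_or_injective (adjoint_mem_intertwiners hA)).resolve_left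
      ((_root_.map_ne_zero_iff _ ContinuousLinearMap.adjoint.injective).2 hA0)
  have : FiniteDimensional ℂ (intertwiners ρ ρ) :=
    Submodule.finiteDimensional_of_le (intertwiners_le_span_one hρ)
  -- `B ↦ A* B` embeds the intertwiners into the scalars.
  exact FiniteDimensional.of_injective
    (intertwinersPostcomp ρ ⟨_, adjoint_mem_intertwiners hA⟩) (intertwinersPostcomp_injective hinj)

end Schur

section Subrep

variable {𝕜 G H H' : Type*} [RCLike 𝕜] [Group G] [NormedAddCommGroup H] [InnerProductSpace 𝕜 H]
  [NormedAddCommGroup H'] [InnerProductSpace 𝕜 H']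

/-- The restriction of a unitary representation to an invariant subspace. -/
def subrep (V : G →* (H ≃ₗᵢ[𝕜] H)) (E : Submodule 𝕜 H) (hE : ∀ g, ∀ x ∈ E, V g x ∈ E) :
    G →* (E ≃ₗᵢ[𝕜] E) where
  toFun g :=
    { toLinearEquiv := .ofLinearMap ((V g).toLinearEquiv.toLinearMap.restrict (hE g))
        ((V g⁻¹).toLinearEquiv.toLinearMap.restrict (hE g⁻¹))
        (by ext; simp) (by ext; simp)
      norm_map' x := (V g).norm_map x }
  map_one' := by ext; simp
  map_mul' g h := by ext; simp

lemma subtypeL_mem_intertwiners {V : G →* (H ≃ₗᵢ[𝕜] H)} {E : Submodule 𝕜 H}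
    (hE : ∀ g, ∀ x ∈ E, V g x ∈ E) : E.subtypeL ∈ intertwiners (subrep V E hE) V :=
  fun _ _ => rfl

/-- The Hilbert direct sum of two unitary representations. -/
def prodRep (V : G →* (H ≃ₗᵢ[𝕜] H)) (W : G →* (H' ≃ₗᵢ[𝕜] H')) :
    G →* (WithLp 2 (H × H') ≃ₗᵢ[𝕜] WithLp 2 (H × H')) where
  toFun g := LinearIsometryEquiv.withLpProdCongr 2 (V g) (W g)
  map_one' := LinearIsometryEquiv.ext fun _ => by rw [map_one, map_one]; rfl
  map_mul' g h := by ext p; simp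

lemma prodRep_apply (V : G →* (H ≃ₗᵢ[𝕜] H)) (W : G →* (H' ≃ₗᵢ[𝕜] H')) (g : G)
    (p : WithLp 2 (H × H')) : prodRep V W g p = .toLp 2 (V g p.fst, W g p.snd) := by
  simp [prodRep]

lemma fstL_mem_intertwiners {V : G →* (H ≃ₗᵢ[𝕜] H)} {W : G →* (H' ≃ₗᵢ[𝕜] H')} :
    WithLp.fstL 2 𝕜 H H' ∈ intertwiners (prodRep V W) V := fun _ _ => by
  simp [prodRep_apply]

/-- A closed invariant subspace on which the representation is irreducible, phrased with subspaces
of the ambient space. As for `IsTopologicallyIrreducible`, the zero subspace is allowed. -/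
structure IsIrreducibleSubspace (V : G →* (H ≃ₗᵢ[𝕜] H)) (E : Submodule 𝕜 H) : Prop where
  isClosed : _root_.IsClosed (E : Set H)
  map_le : ∀ g, E.map (V g).toLinearEquiv.toLinearMap ≤ E
  eq_bot_or_eq : ∀ N : Submodule 𝕜 H, N ≤ E → _root_.IsClosed (N : Set H) →
    (∀ g, N.map (V g).toLinearEquiv.toLinearMap ≤ N) → N = ⊥ ∨ N = E

namespace IsIrreducibleSubspace

variable {V : G →* (H ≃ₗᵢ[𝕜] H)} {E : Submodule 𝕜 H}

lemma apply_mem (hE : IsIrreducibleSubspace V E) (g : G) (x : H) (hx : x ∈ E) : V g x ∈ E :=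
  hE.map_le g (Submodule.mem_map_of_mem hx)

lemma isTopologicallyIrreducible_subrep (hE : IsIrreducibleSubspace V E) :
    IsTopologicallyIrreducible (subrep V E hE.apply_mem) := fun N hN hinv => by
  have hclosed : _root_.IsClosed (N.map E.subtype : Set H) := by
    rw [Submodule.map_coe]
    exact hE.isClosed.isClosedEmbedding_subtypeVal.isClosedMap _ hN
  have hmap : ∀ g, (N.map E.subtype).map (V g).toLinearEquiv.toLinearMap ≤ N.map E.subtype := by
    rintro g _ ⟨_, ⟨x, hx, rfl⟩, rfl⟩
    exact Submodule.mem_map_of_mem (f := E.subtype) (hinv g x hx)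
  have hinj := Submodule.map_injective_of_injective E.subtype_injective
  refine (hE.eq_bot_or_eq _ (E.map_subtype_le N) hclosed hmap).imp (fun h => ?_) fun h => ?_
  · exact hinj (h.trans (Submodule.map_bot _).symm)
  · exact hinj (h.trans E.map_subtype_top.symm)

end IsIrreducibleSubspace

end Subrep

lemma finiteDimensional_intertwiners_of_irreducible_subspaces {G ι H : Type*} [Group G] [Finite ι]
    [NormedAddCommGroup H] [InnerProductSpace ℂ H] [CompleteSpace H] {V : G →* (H ≃ₗᵢ[ℂ] H)}
    {E : ι → Submodule ℂ H} (hE : ∀ i, IsIrreducibleSubspace V (E i))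
    (htotal : (⨆ i, E i).topologicalClosure = ⊤) : FiniteDimensional ℂ (intertwiners V V) := by
  have : ∀ i, CompleteSpace (E i) := fun i => (hE i).isClosed.completeSpace_coe
  let ρ i := subrep V (E i) (hE i).apply_mem
  let inclusion i : intertwiners (ρ i) V := ⟨(E i).subtypeL, subtypeL_mem_intertwiners _⟩
  have hrange : (⨆ i, (inclusion i : E i →L[ℂ] H).range).topologicalClosure = ⊤ := by
    simpa [inclusion] using htotal
  have (i k : ι) : FiniteDimensional ℂ (intertwiners (ρ i) (ρ k)) :=
    finiteDimensional_intertwiners_of_irreducible (hE i).isTopologicallyIrreducible_subrep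
      (hE k).isTopologicallyIrreducible_subrep
  have (i : ι) : FiniteDimensional ℂ (intertwiners (ρ i) V) :=
    finiteDimensional_intertwiners_of_total_right inclusion hrange
  exact finiteDimensional_intertwiners_of_total_left inclusion hrange

lemma continuous_of_isClosed_of_isClosed_domain {𝕜 E F : Type*} [NontriviallyNormedField 𝕜]
    [NormedAddCommGroup E] [NormedSpace 𝕜 E] [CompleteSpace E]
    [NormedAddCommGroup F] [NormedSpace 𝕜 F] [CompleteSpace F] {T : E →ₗ.[𝕜] F}
    (hT : T.IsClosed) (hdom : _root_.IsClosed (T.domain : Set E)) : Continuous T.toFun := by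
  have : CompleteSpace T.domain := hdom.completeSpace_coe
  refine T.toFun.continuous_of_isClosed_graph ?_
  have hpre : (T.toFun.graph : Set (T.domain × F)) =
      Prod.map Subtype.val id ⁻¹' (T.graph : Set (E × F)) := by
    ext ⟨x, y⟩
    simp [LinearPMap.mem_graph_iff, eq_comm]
  rw [hpre]
  exact hT.preimage (by fun_prop)

section GraphL2

variable {𝕜 H H' : Type*} [RCLike 𝕜] [NormedAddCommGroup H] [InnerProductSpace 𝕜 H]
  [NormedAddCommGroup H'] [InnerProductSpace 𝕜 H']

/-- The graph of `T` as a subspace of the Hilbert sum `WithLp 2 (H × H')`; the product `H × H'`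
itself carries the sup norm and is not an inner product space. -/
def graphL2 (T : H →ₗ.[𝕜] H') : Submodule 𝕜 (WithLp 2 (H × H')) :=
  T.graph.comap (WithLp.linearEquiv 2 𝕜 (H × H')).toLinearMap

lemma mem_graphL2_iff {T : H →ₗ.[𝕜] H'} {p : WithLp 2 (H × H')} :
    p ∈ graphL2 T ↔ ∃ x : T.domain, (x : H) = p.fst ∧ T x = p.snd :=
  T.mem_graph_iff

lemma isClosed_graphL2 {T : H →ₗ.[𝕜] H'} (hT : T.IsClosed) :
    _root_.IsClosed (graphL2 T : Set (WithLp 2 (H × H'))) :=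
  hT.preimage (WithLp.prod_continuous_ofLp 2 H H')

lemma range_fstL_comp_subtypeL_graphL2 (T : H →ₗ.[𝕜] H') :
    Set.range (WithLp.fstL 2 𝕜 H H' ∘L (graphL2 T).subtypeL) = T.domain := by
  ext x
  constructor
  · rintro ⟨q, rfl⟩
    obtain ⟨x, hx, -⟩ := mem_graphL2_iff.1 q.2
    exact Set.mem_of_eq_of_mem hx.symm x.2
  · exact fun hx => ⟨⟨.toLp 2 (x, T ⟨x, hx⟩), mem_graphL2_iff.2 ⟨⟨x, hx⟩, rfl, rfl⟩⟩, rfl⟩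

end GraphL2

section GInvariant

variable {G H : Type*} [Group G] [NormedAddCommGroup H] [InnerProductSpace ℂ H]
  {V : G →* (H ≃ₗᵢ[ℂ] H)} {T : H →ₗ.[ℂ] H}

lemma GInvariant.prodRep_apply_mem_graphL2 (hinv : GInvariant V T) (g : G)
    (p : WithLp 2 (H × H)) (hp : p ∈ graphL2 T) : prodRep V V g p ∈ graphL2 T := by
  obtain ⟨x, hx, hTx⟩ := mem_graphL2_iff.1 hp
  obtain ⟨hgx, hT⟩ := hinv g x
  exact mem_graphL2_iff.2 ⟨⟨V g x, hgx⟩, by simp [prodRep_apply, hx],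
    by simp [prodRep_apply, hT, hTx]⟩

lemma GInvariant.domain_eq_top [CompleteSpace H] [FiniteDimensional ℂ (intertwiners V V)]
    (hinv : GInvariant V T) (hT : T.IsClosed) (hdense : Dense (T.domain : Set H)) :
    T.domain = ⊤ := by
  have : CompleteSpace (graphL2 T) := (isClosed_graphL2 hT).completeSpace_coe
  let p : graphL2 T →L[ℂ] H := WithLp.fstL 2 ℂ H H ∘L (graphL2 T).subtypeL
  have hp : p ∈ intertwiners (subrep (prodRep V V) (graphL2 T) hinv.prodRep_apply_mem_graphL2) V :=
    comp_mem_intertwiners fstL_mem_intertwiners (subtypeL_mem_intertwiners _)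
  have hrange : Set.range p = T.domain := range_fstL_comp_subtypeL_graphL2 T
  have hsurj : Function.Surjective p :=
    surjective_of_denseRange_of_mem_intertwiners hp (by rwa [DenseRange, hrange])
  exact SetLike.coe_injective (hrange.symm.trans hsurj.range_eq)

end GInvariant

theorem equivalent_irreps_bounded_general {G ι H : Type*} [Group G] [Finite ι]
    [NormedAddCommGroup H] [InnerProductSpace ℂ H] [CompleteSpace H] (V : G →* (H ≃ₗᵢ[ℂ] H))
    (E : ι → Submodule ℂ H) (hE : ∀ i, IsIrreducibleSubspace V (E i))
    (htotal : (⨆ i, E i).topologicalClosure = ⊤)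
    (T : H →ₗ.[ℂ] H) (hdense : Dense (T.domain : Set H)) (hT : T.IsClosed)
    (hinv : GInvariant V T) :
    T.domain = ⊤ ∧ ∃ C : ℝ, ∀ x : T.domain, ‖T x‖ ≤ C * ‖(x : H)‖ := by
  have := finiteDimensional_intertwiners_of_irreducible_subspaces hE htotal
  have htop : T.domain = ⊤ := hinv.domain_eq_top hT hdense
  have hcont : Continuous T.toFun :=
    continuous_of_isClosed_of_isClosed_domain hT (htop ▸ isClosed_univ)
  let T' : T.domain →L[ℂ] H := ⟨T.toFun, hcont⟩
  exact ⟨htop, ‖T'‖, T'.le_opNorm⟩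

/-- If `V = V₁ ⊕ V₂` with `V₁, V₂` irreducible and unitarily equivalent, then any
`G`-invariant self-adjoint operator `T` is bounded. -/
theorem equivalent_irreps_bounded {H : Type*} [NormedAddCommGroup H]
    [InnerProductSpace ℂ H] [CompleteSpace H] {G : Type*} [Group G]
    (V : G →* (H ≃ₗᵢ[ℂ] H)) (H1 H2 : Submodule ℂ H)
    -- orthogonal decomposition `H = H₁ ⊕ H₂`
    (hcl1 : IsClosed (H1 : Set H)) (hcl2 : IsClosed (H2 : Set H))
    (horth : ∀ x ∈ H1, ∀ y ∈ H2, ⟪x, y⟫_ℂ = 0)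
    (htotal : (H1 ⊔ H2).topologicalClosure = ⊤)
    -- `H₁`, `H₂` invariant, sub-representations irreducible
    (hsub1 : ∀ g : G, H1.map (V g).toLinearEquiv.toLinearMap = H1)
    (hsub2 : ∀ g : G, H2.map (V g).toLinearEquiv.toLinearMap = H2)
    (hirr1 : ∀ K : Submodule ℂ H, K ≤ H1 → IsClosed (K : Set H) →
      (∀ g : G, K.map (V g).toLinearEquiv.toLinearMap ≤ K) → K = ⊥ ∨ K = H1)
    (hirr2 : ∀ K : Submodule ℂ H, K ≤ H2 → IsClosed (K : Set H) →
      (∀ g : G, K.map (V g).toLinearEquiv.toLinearMap ≤ K) → K = ⊥ ∨ K = H2)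
    -- `V₂ = U V₁ U*` for a unitary `U : H₁ → H₂` intertwining the sub-representations
    (U : H1 ≃ₗᵢ[ℂ] H2)
    (hU : ∀ (g : G) (x : H1) (hx : V g (x : H) ∈ H1),
      (U ⟨V g (x : H), hx⟩ : H) = V g (U x : H))
    -- `T` self-adjoint and `G`-invariant
    (T : H →ₗ.[ℂ] H) (hdense : Dense (T.domain : Set H)) (hsa : T.adjoint = T)
    (hinv : GInvariant V T) :
    T.domain = ⊤ ∧ ∃ C : ℝ, ∀ x : T.domain, ‖T x‖ ≤ C * ‖(x : H)‖ := by
  exact equivalent_irreps_bounded_general V (fun b => cond b H1 H2)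
    (Bool.forall_bool.2 ⟨⟨hcl2, fun g => (hsub2 g).le, hirr2⟩, hcl1, fun g => (hsub1 g).le, hirr1⟩)
    (by rwa [iSup_bool_eq]) T hdense (IsSelfAdjoint.isClosed hsa) hinv
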